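/- For every nonnegative integer n, there exist integers x, y, z, each relatively prime to 6, such that 24n + 7 = x² + 3y² + 3z². -/

import Mathlib

/-!
The positive definite form `u² + uv + v² + w²` is the only one of its half-discriminant up to
equivalence, by Hermite reduction. For `m ≡ 7 (mod 12)`, Dirichlet's theorem and quadratic
reciprocity produce a form `A x² + p y² + 3m z² + 3 x z + 2 β x y` of the same half-discriminant,
so that `3m = u² + uv + v² + w²`. Modulo `3` this forces `u ≡ v` and `w ≡ 0`, and dividing by `3`
gives `m = x² + 3y² + 3z²`. If moreover `m ≡ 7 (mod 8)`, the variables are made prime to `6`, two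
at a time, by multiplying `x + y√-3` by sixth roots of unity.
-/

theorem exists_two_mul_abs_add_mul_le (r : ℤ) {M : ℤ} (hM : 0 < M) :
    ∃ t : ℤ, 2 * |r + M * t| ≤ M := by
  lift M to ℕ using hM.le
  refine ⟨-r.bdiv M, ?_⟩
  have hr : r + M * -r.bdiv M = r.bmod M := by linarith [Int.bmod_add_bdiv r M]
  have hlower := Int.le_bmod (x := r) (m := M) (by omega)
  have hupper := Int.bmod_le (x := r) (m := M) (by omega)
  have habs : |r.bmod M| ≤ (M : ℤ) / 2 := abs_le.mpr ⟨hlower, by omega⟩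
  rw [hr]
  omega

/-- The integral ternary quadratic form
`a x² + b y² + c z² + d y z + e x z + f x y`; cross coefficients may be odd. -/
structure TernaryForm where
  (a b c d e f : ℤ)

namespace TernaryForm

variable (Q : TernaryForm)

/-- The integer `N` is a value of `Q` at integers. -/
def Represents (N : ℤ) : Prop :=
  ∃ x y z : ℤ, Q.a * x ^ 2 + Q.b * y ^ 2 + Q.c * z ^ 2 + Q.d * y * z + Q.e * x * z + Q.f * x * y = N

/-- Half the determinant of the Hessian matrix of `Q`, an integer. -/
def halfDisc : ℤ :=
  4 * Q.a * Q.b * Q.c + Q.d * Q.e * Q.f - Q.a * Q.d ^ 2 - Q.b * Q.e ^ 2 - Q.c * Q.f ^ 2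

/-- The leading coefficient of the projected binary form
`4 a Q - (2 a x + f y + e z)² = minor * y² + 2 * cross * y z + (4 a c - e²) * z²`. -/
def minor : ℤ := 4 * Q.a * Q.b - Q.f ^ 2

/-- Half the middle coefficient of the projected binary form described at `TernaryForm.minor`. -/
def cross : ℤ := 2 * Q.a * Q.d - Q.e * Q.f

/-- Positive definiteness, expressed by Sylvester's criterion. -/
structure PosDef : Prop where
  a_pos : 0 < Q.a
  minor_pos : 0 < Q.minor
  halfDisc_pos : 0 < Q.halfDisc

/-- Interchange of the first two variables. -/
def swapXY : TernaryForm := ⟨Q.b, Q.a, Q.c, Q.e, Q.d, Q.f⟩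

/-- Interchange of the last two variables. -/
def swapYZ : TernaryForm := ⟨Q.a, Q.c, Q.b, Q.d, Q.f, Q.e⟩

/-- The unitriangular substitution `x ↦ x + r y + s z`, `y ↦ y + t z`. -/
def shear (r s t : ℤ) : TernaryForm where
  a := Q.a
  b := Q.b + Q.f * r + Q.a * r ^ 2
  c := Q.c + Q.e * s + Q.a * s ^ 2 + Q.d * t + Q.b * t ^ 2 + Q.f * s * t
  d := Q.d + 2 * Q.b * t + Q.e * r + Q.f * (r * t + s) + 2 * Q.a * r * s
  e := Q.e + Q.f * t + 2 * Q.a * s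
  f := Q.f + 2 * Q.a * r

/-- Size reduction: the part of Hermite reduction achieved by shears. -/
structure IsSizeReduced : Prop where
  abs_f_le : |Q.f| ≤ Q.a
  abs_e_le : |Q.e| ≤ Q.a
  abs_cross_le : 2 * |Q.cross| ≤ Q.minor

/-- Hermite-reduced positive definite forms: the binary form `a x² + f x y + b y²` and the projected
binary form are both reduced in the sense of Lagrange, and `|e| ≤ a`. -/
structure IsReduced : Prop extends Q.PosDef, Q.IsSizeReduced where
  a_le_b : Q.a ≤ Q.b
  minor_le : Q.minor ≤ Q.swapYZ.minor

theorem halfDisc_swapXY : Q.swapXY.halfDisc = Q.halfDisc := by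
  simp only [halfDisc, swapXY]
  ring

theorem halfDisc_swapYZ : Q.swapYZ.halfDisc = Q.halfDisc := by
  simp only [halfDisc, swapYZ]
  ring

theorem halfDisc_shear (r s t : ℤ) : (Q.shear r s t).halfDisc = Q.halfDisc := by
  simp only [halfDisc, shear]
  ring

theorem minor_swapXY : Q.swapXY.minor = Q.minor := by
  simp only [minor, swapXY]
  ring

theorem minor_shear (r s t : ℤ) : (Q.shear r s t).minor = Q.minor := by
  simp only [minor, shear]
  ring

theorem cross_shear (r s t : ℤ) : (Q.shear r s t).cross = Q.cross + Q.minor * t := by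
  simp only [cross, minor, shear]
  ring

theorem minor_mul_minor_swapYZ_sub_cross_sq :
    Q.minor * Q.swapYZ.minor - Q.cross ^ 2 = 4 * Q.a * Q.halfDisc := by
  simp only [minor, swapYZ, cross, halfDisc]
  ring

variable {Q}

theorem represents_swapXY {N : ℤ} : Q.swapXY.Represents N ↔ Q.Represents N := by
  constructor <;> rintro ⟨x, y, z, h⟩ <;> refine ⟨y, x, z, ?_⟩ <;>
    simp only [swapXY] at h ⊢ <;> linear_combination h

theorem represents_swapYZ {N : ℤ} : Q.swapYZ.Represents N ↔ Q.Represents N := by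
  constructor <;> rintro ⟨x, y, z, h⟩ <;> refine ⟨x, z, y, ?_⟩ <;>
    simp only [swapYZ] at h ⊢ <;> linear_combination h

theorem represents_shear {N r s t : ℤ} : (Q.shear r s t).Represents N ↔ Q.Represents N := by
  constructor <;> rintro ⟨x, y, z, h⟩
  · refine ⟨x + r * y + s * z, y + t * z, z, ?_⟩
    simp only [shear] at h
    linear_combination h
  · refine ⟨x - r * (y - t * z) - s * z, y - t * z, z, ?_⟩
    simp only [shear]
    linear_combination h

theorem PosDef.swapXY (hQ : Q.PosDef) : Q.swapXY.PosDef where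
  a_pos := by
    have hab : 0 < Q.a * Q.b := by
      have := hQ.minor_pos
      simp only [minor] at this
      linarith [sq_nonneg Q.f]
    exact pos_of_mul_pos_right hab hQ.a_pos.le
  minor_pos := minor_swapXY Q ▸ hQ.minor_pos
  halfDisc_pos := halfDisc_swapXY Q ▸ hQ.halfDisc_pos

theorem PosDef.swapYZ (hQ : Q.PosDef) : Q.swapYZ.PosDef where
  a_pos := hQ.a_pos
  minor_pos := by
    have hmul : 0 < Q.minor * Q.swapYZ.minor := by
      have := mul_pos hQ.a_pos hQ.halfDisc_pos
      linarith [minor_mul_minor_swapYZ_sub_cross_sq Q, sq_nonneg Q.cross]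
    exact pos_of_mul_pos_right hmul hQ.minor_pos.le
  halfDisc_pos := halfDisc_swapYZ Q ▸ hQ.halfDisc_pos

theorem PosDef.shear (hQ : Q.PosDef) (r s t : ℤ) : (Q.shear r s t).PosDef where
  a_pos := hQ.a_pos
  minor_pos := minor_shear Q r s t ▸ hQ.minor_pos
  halfDisc_pos := halfDisc_shear Q r s t ▸ hQ.halfDisc_pos

theorem PosDef.exists_isSizeReduced_shear (hQ : Q.PosDef) :
    ∃ r s t : ℤ, (Q.shear r s t).IsSizeReduced := by
  have ha : 0 < 2 * Q.a := by linarith [hQ.a_pos]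
  obtain ⟨t, ht⟩ := exists_two_mul_abs_add_mul_le Q.cross hQ.minor_pos
  obtain ⟨r, hr⟩ := exists_two_mul_abs_add_mul_le Q.f ha
  obtain ⟨s, hs⟩ := exists_two_mul_abs_add_mul_le (Q.e + Q.f * t) ha
  refine ⟨r, s, t, ?_, ?_, ?_⟩
  · exact le_of_mul_le_mul_left hr two_pos
  · exact le_of_mul_le_mul_left hs two_pos
  · rwa [cross_shear, minor_shear]

theorem PosDef.exists_isReduced {Q : TernaryForm} (hQ : Q.PosDef) :
    ∃ R : TernaryForm, R.IsReduced ∧ R.halfDisc = Q.halfDisc ∧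
      ∀ N, R.Represents N ↔ Q.Represents N := by
  obtain ⟨r, s, t, hred⟩ := hQ.exists_isSizeReduced_shear
  have hdisc := halfDisc_shear Q r s t
  have hpos := hQ.shear r s t
  by_cases hab : (Q.shear r s t).a ≤ (Q.shear r s t).b
  · by_cases hminor : (Q.shear r s t).minor ≤ (Q.shear r s t).swapYZ.minor
    · exact ⟨_, ⟨hpos, hred, hab, hminor⟩, hdisc, fun _ ↦ represents_shear⟩
    · obtain ⟨R, hRred, hRdisc, hRrep⟩ := hpos.swapYZ.exists_isReduced
      exact ⟨R, hRred, hRdisc.trans ((halfDisc_swapYZ _).trans hdisc), fun N ↦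
        (hRrep N).trans (represents_swapYZ.trans represents_shear)⟩
  · obtain ⟨R, hRred, hRdisc, hRrep⟩ := hpos.swapXY.exists_isReduced
    exact ⟨R, hRred, hRdisc.trans ((halfDisc_swapXY _).trans hdisc), fun N ↦
      (hRrep N).trans (represents_swapXY.trans represents_shear)⟩
-- Shears preserve `(a, minor)`, and each swap is made only when it lowers this pair.
termination_by (Q.a.toNat, Q.minor.toNat)
decreasing_by
  · rw [minor_shear, not_le] at hminor
    exact Prod.Lex.right _ ((Int.toNat_lt_toNat hQ.minor_pos).mpr hminor)
  · exact Prod.Lex.left _ _ ((Int.toNat_lt_toNat hQ.a_pos).mpr (not_le.mp hab))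

theorem IsReduced.three_mul_a_sq_le (hQ : Q.IsReduced) : 3 * Q.a ^ 2 ≤ Q.minor := by
  have hf : Q.f ^ 2 ≤ Q.a ^ 2 := sq_le_sq.mpr (hQ.abs_f_le.trans (le_abs_self _))
  have hab : Q.a * Q.a ≤ Q.a * Q.b := mul_le_mul_of_nonneg_left hQ.a_le_b hQ.a_pos.le
  simp only [minor]
  linarith

theorem IsReduced.three_mul_minor_sq_le (hQ : Q.IsReduced) :
    3 * Q.minor ^ 2 ≤ 16 * Q.a * Q.halfDisc := by
  have hcross : (2 * Q.cross) ^ 2 ≤ Q.minor ^ 2 := by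
    refine sq_le_sq.mpr ?_
    rw [abs_mul, abs_two, abs_of_pos hQ.minor_pos]
    exact hQ.abs_cross_le
  have hmul : Q.minor * Q.minor ≤ Q.minor * Q.swapYZ.minor :=
    mul_le_mul_of_nonneg_left hQ.minor_le hQ.minor_pos.le
  linarith [minor_mul_minor_swapYZ_sub_cross_sq Q]

theorem IsReduced.a_cube_le (hQ : Q.IsReduced) : 27 * Q.a ^ 3 ≤ 16 * Q.halfDisc := by
  have hsq : (3 * Q.a ^ 2) ^ 2 ≤ Q.minor ^ 2 :=
    pow_le_pow_left₀ (by positivity) hQ.three_mul_a_sq_le 2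
  refine le_of_mul_le_mul_left ?_ hQ.a_pos
  linarith [hQ.three_mul_minor_sq_le]

theorem IsReduced.a_eq_one_of_halfDisc_eq_three (hQ : Q.IsReduced) (hdisc : Q.halfDisc = 3) :
    Q.a = 1 := by
  have hcube := hQ.a_cube_le
  by_contra hne
  have htwo : 2 ≤ Q.a := by have := hQ.a_pos; omega
  have : 2 ^ 3 ≤ Q.a ^ 3 := pow_le_pow_left₀ (by norm_num) htwo 3
  linarith

theorem IsReduced.b_eq_one_of_halfDisc_eq_three (hQ : Q.IsReduced) (hdisc : Q.halfDisc = 3) :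
    Q.b = 1 := by
  have ha := hQ.a_eq_one_of_halfDisc_eq_three hdisc
  have hminor : Q.minor ≤ 4 := by
    have hsq := hQ.three_mul_minor_sq_le
    rw [ha, hdisc] at hsq
    exact le_of_sq_le_sq (by linarith) (by norm_num)
  have hf : Q.f ^ 2 ≤ 1 := (sq_le_one_iff_abs_le_one _).mpr (ha ▸ hQ.abs_f_le)
  have hab := hQ.a_le_b
  simp only [minor, ha] at hminor
  omega

theorem IsReduced.abs_d_le_one_of_halfDisc_eq_three (hQ : Q.IsReduced) (hdisc : Q.halfDisc = 3) :
    |Q.d| ≤ 1 := by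
  have ha := hQ.a_eq_one_of_halfDisc_eq_three hdisc
  have hef : |Q.e * Q.f| ≤ 1 := by
    rw [abs_mul]
    exact mul_le_one₀ (ha ▸ hQ.abs_e_le) (abs_nonneg _) (ha ▸ hQ.abs_f_le)
  have hcross : |2 * Q.d - Q.e * Q.f| ≤ 2 := by
    have := hQ.abs_cross_le
    simp only [cross, minor, ha, hQ.b_eq_one_of_halfDisc_eq_three hdisc, mul_one] at this
    linarith [sq_nonneg Q.f]
  rw [abs_le] at hef hcross ⊢
  omega

theorem IsReduced.coeffs_of_halfDisc_eq_three (hQ : Q.IsReduced) (hdisc : Q.halfDisc = 3) :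
    Q.a = 1 ∧ Q.b = 1 ∧ Q.c = 1 ∧
      (Q.d ^ 2 = 1 ∧ Q.e = 0 ∧ Q.f = 0 ∨ Q.d = 0 ∧ Q.e ^ 2 = 1 ∧ Q.f = 0 ∨
        Q.d = 0 ∧ Q.e = 0 ∧ Q.f ^ 2 = 1) := by
  have ha := hQ.a_eq_one_of_halfDisc_eq_three hdisc
  have hb := hQ.b_eq_one_of_halfDisc_eq_three hdisc
  obtain ⟨hd₁, hd₂⟩ := abs_le.mp (hQ.abs_d_le_one_of_halfDisc_eq_three hdisc)
  obtain ⟨he₁, he₂⟩ := abs_le.mp (ha ▸ hQ.abs_e_le)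
  obtain ⟨hf₁, hf₂⟩ := abs_le.mp (ha ▸ hQ.abs_f_le)
  have hcross : |2 * Q.cross| ≤ Q.minor := by
    rw [abs_mul, abs_two]
    exact hQ.abs_cross_le
  obtain ⟨a, b, c, d, e, f⟩ := Q
  simp only [halfDisc, cross, minor, abs_le] at *
  subst ha hb
  interval_cases d <;> interval_cases e <;> interval_cases f <;> omega

theorem PosDef.exists_sq_add_mul_add_sq_add_sq_eq_of_halfDisc_eq_three (hQ : Q.PosDef)
    (hdisc : Q.halfDisc = 3) {N : ℤ} (hN : Q.Represents N) :
    ∃ u v w : ℤ, u ^ 2 + u * v + v ^ 2 + w ^ 2 = N := by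
  obtain ⟨R, hRred, hRdisc, hRrep⟩ := hQ.exists_isReduced
  obtain ⟨x, y, z, hxyz⟩ := (hRrep N).mpr hN
  obtain ⟨ha, hb, hc, hdef⟩ := hRred.coeffs_of_halfDisc_eq_three (hRdisc.trans hdisc)
  rw [ha, hb, hc] at hxyz
  rcases hdef with ⟨hd, he, hf⟩ | ⟨hd, he, hf⟩ | ⟨hd, he, hf⟩
  · rw [he, hf] at hxyz
    exact ⟨y, R.d * z, x, by linear_combination hxyz + z ^ 2 * hd⟩
  · rw [hd, hf] at hxyz
    exact ⟨x, R.e * z, y, by linear_combination hxyz + z ^ 2 * he⟩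
  · rw [hd, he] at hxyz
    exact ⟨x, R.f * y, z, by linear_combination hxyz + y ^ 2 * hf⟩

end TernaryForm

section Reciprocity

open scoped NumberTheorySymbols

theorem exists_prime_dvd_mul_add_one {q r : ℕ} [NeZero q] (h : r.Coprime q) :
    ∃ p : ℕ, p.Prime ∧ q ∣ r * p + 1 := by
  obtain ⟨u, hu⟩ := (ZMod.isUnit_iff_coprime r q).mpr h
  obtain ⟨p, -, hp, hpu⟩ := Nat.forall_exists_prime_gt_and_eq_mod (-u⁻¹).isUnit 0
  refine ⟨p, hp, (ZMod.natCast_eq_zero_iff _ _).mp ?_⟩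
  push_cast
  rw [hpu, ← hu, Units.val_neg, mul_neg, u.mul_inv, neg_add_cancel]

theorem jacobiSym_three_eq_neg_one {m : ℕ} (hm : m % 12 = 7) : J((3 : ℕ) | m) = -1 := by
  have hmod : (m : ℤ) % (3 : ℕ) = 1 := by omega
  rw [jacobiSym.quadratic_reciprocity_three_mod_four (by norm_num) (by omega),
    jacobiSym.mod_left, hmod, jacobiSym.one_left]

theorem jacobiSym_eq_one_of_dvd_three_mul_add_one {m p : ℕ} (hm : m % 12 = 7)
    (h : m ∣ 3 * p + 1) : J(p | m) = 1 := by
  have hmodd : Odd m := Nat.odd_iff.mpr (by omega)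
  have hmod : (3 * p : ℤ) ≡ -1 [ZMOD m] :=
    (Int.modEq_iff_dvd.mpr (by simpa using Int.natCast_dvd_natCast.mpr h)).symm
  have hmul : J((3 : ℕ) | m) * J(p | m) = -1 := by
    rw [← jacobiSym.mul_left, Nat.cast_ofNat, jacobiSym.mod_left' hmod, jacobiSym.at_neg_one hmodd,
      ZMod.χ₄_nat_three_mod_four (by omega)]
  rw [jacobiSym_three_eq_neg_one hm] at hmul
  linarith

theorem jacobiSym_neg_eq_one {m p k : ℕ} (hm : m % 12 = 7) (h : 3 * p + 1 = 4 * m * k) :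
    J(-k | p) = 1 := by
  have hp4 : p % 4 = 1 := by
    rw [mul_assoc] at h
    omega
  have hpodd : Odd p := Nat.odd_iff.mpr (by omega)
  have hmp : J(m | p) = 1 := by
    rw [jacobiSym.quadratic_reciprocity_one_mod_four' (Nat.odd_iff.mpr (by omega)) hp4]
    exact jacobiSym_eq_one_of_dvd_three_mul_add_one hm ⟨4 * k, by linarith⟩
  have hmod : (4 * m * k : ℤ) ≡ 1 [ZMOD p] :=
    (Int.modEq_iff_dvd.mpr ⟨3, by zify at h; linarith⟩).symm
  have hmul : J(4 | p) * J(m | p) * J(k | p) = 1 := by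
    rw [← jacobiSym.mul_left, ← jacobiSym.mul_left, jacobiSym.mod_left' hmod, jacobiSym.one_left]
  rw [jacobiSym.neg _ hpodd, ZMod.χ₄_nat_one_mod_four hp4]
  rwa [jacobiSym.at_four hpodd, hmp, one_mul, ← one_mul 1] at hmul

theorem exists_sq_add_eq_mul_of_jacobiSym {p : ℕ} (hp : p.Prime) {k : ℤ} (h : J(-k | p) = 1) :
    ∃ A β : ℤ, β ^ 2 + k = A * p := by
  have : Fact p.Prime := ⟨hp⟩
  obtain ⟨r, hr⟩ := ZMod.isSquare_of_jacobiSym_eq_one h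
  obtain ⟨β, rfl⟩ := ZMod.intCast_surjective r
  have hdvd : (p : ℤ) ∣ β ^ 2 + k := by
    rw [← ZMod.intCast_zmod_eq_zero_iff_dvd]
    push_cast at hr ⊢
    linear_combination -hr
  obtain ⟨A, hA⟩ := hdvd
  exact ⟨A, β, by rw [hA, mul_comm]⟩

theorem exists_sq_add_mul_add_sq_add_sq_eq_three_mul {m : ℕ} (hm : m % 12 = 7) :
    ∃ u v w : ℤ, u ^ 2 + u * v + v ^ 2 + w ^ 2 = 3 * m := by
  have : NeZero (4 * m) := ⟨by omega⟩
  have hcop : Nat.Coprime 3 (4 * m) := Nat.prime_three.coprime_iff_not_dvd.mpr (by omega)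
  obtain ⟨p, hp, k, hk⟩ := exists_prime_dvd_mul_add_one hcop
  obtain ⟨A, β, hβ⟩ := exists_sq_add_eq_mul_of_jacobiSym hp (jacobiSym_neg_eq_one hm hk)
  have hk0 : 0 < k := Nat.pos_of_ne_zero (by rintro rfl; omega)
  have hAp : 0 < A * p := by rw [← hβ]; positivity
  have hA : 0 < A := pos_of_mul_pos_left hAp p.cast_nonneg
  zify at hk hk0
  let Q : TernaryForm := ⟨A, p, 3 * m, 0, 3, 2 * β⟩
  have hdisc : Q.halfDisc = 3 := by
    simp only [TernaryForm.halfDisc, Q]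
    linear_combination -12 * (m : ℤ) * hβ - 3 * hk
  have hminor : Q.minor = 4 * k := by
    simp only [TernaryForm.minor, Q]
    linear_combination -4 * hβ
  have hQ : Q.PosDef := ⟨hA, by linarith, by linarith⟩
  have hrep : Q.Represents (3 * m) := ⟨0, 0, 1, by simp only [Q]; ring⟩
  exact hQ.exists_sq_add_mul_add_sq_add_sq_eq_of_halfDisc_eq_three hdisc hrep

end Reciprocity

theorem exists_sq_add_mul_add_sq_eq_sq_add_three_mul_sq (u v : ℤ) :
    ∃ x y : ℤ, u ^ 2 + u * v + v ^ 2 = x ^ 2 + 3 * y ^ 2 := by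
  rcases Int.even_or_odd' v with ⟨s, rfl | rfl⟩
  · exact ⟨u + s, s, by ring⟩
  · rcases Int.even_or_odd' u with ⟨r, rfl | rfl⟩
    · exact ⟨2 * s + 1 + r, r, by ring⟩
    · exact ⟨r - s, r + s + 1, by ring⟩

theorem three_dvd_and_three_dvd_of_three_dvd_sq_add_sq {x y : ℤ} (h : 3 ∣ x ^ 2 + y ^ 2) :
    3 ∣ x ∧ 3 ∣ y := by
  have hzmod : ∀ a b : ZMod 3, a ^ 2 + b ^ 2 = 0 → a = 0 ∧ b = 0 := by decide
  simp only [← Nat.cast_ofNat (R := ℤ) (n := 3), ← ZMod.intCast_zmod_eq_zero_iff_dvd] at h ⊢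
  exact hzmod x y (by exact_mod_cast h)

theorem exists_eq_sq_add_three_mul_sq_add_three_mul_sq {u v w m : ℤ}
    (h : u ^ 2 + u * v + v ^ 2 + w ^ 2 = 3 * m) :
    ∃ x y z : ℤ, m = x ^ 2 + 3 * y ^ 2 + 3 * z ^ 2 := by
  have hdvd : 3 ∣ (u - v) ^ 2 + w ^ 2 := ⟨m - u * v, by linear_combination h⟩
  obtain ⟨⟨s, hs⟩, ⟨z, rfl⟩⟩ := three_dvd_and_three_dvd_of_three_dvd_sq_add_sq hdvd
  obtain rfl : u = v + 3 * s := by linarith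
  obtain ⟨x, y, hxy⟩ := exists_sq_add_mul_add_sq_eq_sq_add_three_mul_sq (v + s) s
  exact ⟨x, y, z, by linarith⟩

theorem gcd_six_eq_one_iff {x : ℤ} : Int.gcd x 6 = 1 ↔ Odd x ∧ ¬ 3 ∣ x := by
  rw [← Int.isCoprime_iff_gcd_eq_one, show (6 : ℤ) = 2 * 3 by norm_num, IsCoprime.mul_right_iff,
    Int.isCoprime_two_right, isCoprime_comm, Int.prime_three.coprime_iff_not_dvd]

theorem three_dvd_sq_add_three_mul_iff (x k : ℤ) : 3 ∣ x ^ 2 + 3 * k ↔ 3 ∣ x := by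
  rw [dvd_add_left (dvd_mul_right 3 k), Int.prime_three.dvd_pow_iff_dvd two_ne_zero]

theorem odd_sq_add_three_mul_sq_iff (x y : ℤ) : Odd (x ^ 2 + 3 * y ^ 2) ↔ Odd (x + y) := by
  have hdiff : Even (x ^ 2 + 3 * y ^ 2 - (x + y)) := by
    rw [show x ^ 2 + 3 * y ^ 2 - (x + y) = x * (x - 1) + y * (y - 1) + 2 * y ^ 2 by ring]
    exact ((Int.even_mul_pred_self x).add (Int.even_mul_pred_self y)).add (even_two_mul _)
  rw [← Int.not_even_iff_odd, ← Int.not_even_iff_odd, Int.even_sub.mp hdiff]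

theorem exists_odd_sq_add_three_mul_sq {x y : ℤ} (h8 : (x ^ 2 + 3 * y ^ 2) % 8 = 4) :
    ∃ x' y' : ℤ, Odd x' ∧ Odd y' ∧ x ^ 2 + 3 * y ^ 2 = x' ^ 2 + 3 * y' ^ 2 := by
  have hxy : Even (x + y) := by
    rw [← Int.not_odd_iff_even, ← odd_sq_add_three_mul_sq_iff, Int.odd_iff]
    omega
  rcases Int.even_or_odd' x with ⟨r, rfl | rfl⟩
  · obtain ⟨s, rfl⟩ := ((Int.even_add.mp hxy).mp (even_two_mul r)).two_dvd
    have hodd : Odd (r + s) := by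
      rw [← odd_sq_add_three_mul_sq_iff, Int.odd_iff]
      have : (2 * r) ^ 2 + 3 * (2 * s) ^ 2 = 4 * (r ^ 2 + 3 * s ^ 2) := by ring
      omega
    refine ⟨r + s + 2 * s, r + s - 2 * s, ?_, ?_, by ring⟩
    · exact hodd.add_even (even_two_mul s)
    · exact hodd.sub_even (even_two_mul s)
  · exact ⟨_, y, odd_two_mul_add_one r, (Int.even_add'.mp hxy).mp (odd_two_mul_add_one r), rfl⟩

theorem exists_gcd_six_eq_one_of_odd {x y : ℤ} (hx : Odd x) (hy : Odd y) (h3 : ¬ 3 ∣ x) :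
    ∃ x' y' : ℤ, Int.gcd x' 6 = 1 ∧ Int.gcd y' 6 = 1 ∧
      x ^ 2 + 3 * y ^ 2 = x' ^ 2 + 3 * y' ^ 2 := by
  simp only [gcd_six_eq_one_iff]
  by_cases hy3 : 3 ∣ y
  · obtain ⟨s, hs⟩ := even_iff_two_dvd.mp (hx.sub_odd hy)
    obtain rfl : x = y + 2 * s := by linarith
    rcases Int.even_or_odd s with hs | hs
    · exact ⟨s - y, s + y, ⟨hs.sub_odd hy, by omega⟩, ⟨hs.add_odd hy, by omega⟩, by ring⟩
    · exact ⟨2 * y + s, s, ⟨(even_two_mul y).add_odd hs, by omega⟩, ⟨hs, by omega⟩, by ring⟩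
  · exact ⟨x, y, ⟨hx, h3⟩, ⟨hy, hy3⟩, rfl⟩

theorem exists_gcd_six_eq_one_of_mod_eight {x y : ℤ} (h8 : (x ^ 2 + 3 * y ^ 2) % 8 = 4)
    (h3 : ¬ 3 ∣ x) :
    ∃ x' y' : ℤ, Int.gcd x' 6 = 1 ∧ Int.gcd y' 6 = 1 ∧
      x ^ 2 + 3 * y ^ 2 = x' ^ 2 + 3 * y' ^ 2 := by
  obtain ⟨x₁, y₁, hx₁, hy₁, heq⟩ := exists_odd_sq_add_three_mul_sq h8
  have hx₁3 : ¬ 3 ∣ x₁ := by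
    rwa [← three_dvd_sq_add_three_mul_iff x₁, ← heq, three_dvd_sq_add_three_mul_iff]
  rw [heq]
  exact exists_gcd_six_eq_one_of_odd hx₁ hy₁ hx₁3

theorem exists_gcd_six_eq_one_of_odd_of_mod_twentyFour {x y z N : ℤ}
    (hN : N = x ^ 2 + 3 * y ^ 2 + 3 * z ^ 2) (h24 : N % 24 = 7) (hy : Odd y) :
    ∃ x' y' z' : ℤ, Int.gcd x' 6 = 1 ∧ Int.gcd y' 6 = 1 ∧ Int.gcd z' 6 = 1 ∧
      N = x' ^ 2 + 3 * y' ^ 2 + 3 * z' ^ 2 := by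
  have hx3 : ¬ 3 ∣ x := by
    rw [← three_dvd_sq_add_three_mul_iff x (y ^ 2 + z ^ 2)]
    omega
  have hy8 := Int.eight_dvd_sq_sub_one_of_odd hy
  obtain ⟨x₁, z₁, hx₁, hz₁, hxz⟩ :=
    exists_gcd_six_eq_one_of_mod_eight (x := x) (y := z) (by omega) hx3
  obtain ⟨hx₁odd, hx₁3⟩ := gcd_six_eq_one_iff.mp hx₁
  have hx₁8 := Int.eight_dvd_sq_sub_one_of_odd hx₁odd
  obtain ⟨x₂, y₂, hx₂, hy₂, hxy⟩ :=
    exists_gcd_six_eq_one_of_mod_eight (x := x₁) (y := y) (by omega) hx₁3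
  exact ⟨x₂, y₂, z₁, hx₂, hy₂, hz₁, by linarith⟩

theorem odd_or_odd_of_sq_add_three_mul_sq_add_three_mul_sq {x y z : ℤ}
    (h4 : (x ^ 2 + 3 * y ^ 2 + 3 * z ^ 2) % 4 = 3) : Odd y ∨ Odd z := by
  by_contra! hyz
  simp only [Int.not_odd_iff_even] at hyz
  have hy := pow_dvd_pow_of_dvd hyz.1.two_dvd 2
  have hz := pow_dvd_pow_of_dvd hyz.2.two_dvd 2
  rcases Int.even_or_odd x with hx | hx
  · have := pow_dvd_pow_of_dvd hx.two_dvd 2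
    omega
  · have := Int.sq_mod_four_eq_one_of_odd hx
    omega

theorem rep_24n_add_seven (n : ℕ) :
    ∃ x y z : ℤ, Int.gcd x 6 = 1 ∧ Int.gcd y 6 = 1 ∧ Int.gcd z 6 = 1 ∧
      24 * (n : ℤ) + 7 = x ^ 2 + 3 * y ^ 2 + 3 * z ^ 2 := by
  obtain ⟨u, v, w, huvw⟩ :=
    exists_sq_add_mul_add_sq_add_sq_eq_three_mul (m := 24 * n + 7) (by omega)
  push_cast at huvw
  obtain ⟨x, y, z, hxyz⟩ := exists_eq_sq_add_three_mul_sq_add_three_mul_sq huvw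
  have h24 : (24 * (n : ℤ) + 7) % 24 = 7 := by omega
  rcases odd_or_odd_of_sq_add_three_mul_sq_add_three_mul_sq
    (x := x) (y := y) (z := z) (by omega) with hy | hz
  · exact exists_gcd_six_eq_one_of_odd_of_mod_twentyFour hxyz h24 hy
  · exact exists_gcd_six_eq_one_of_odd_of_mod_twentyFour (hxyz.trans (add_right_comm _ _ _)) h24 hz
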